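/- Let f : ℝ → S¹ be a pre-periodic function and f̃ : ℝ → ℝ any lift of f. Then the limit lim_{x→+∞} (f̃(x) − f̃(−x))/(2x) exists and is a rational number; moreover this limit does not depend on the choice of the lift f̃. -/

import Mathlib

open Filter

/-- A continuous function `f : ℝ → ℂ` taking values in the unit circle `S¹` is *pre-periodic*
if for every `ε > 0` there is a positive integer `N` such that
`|f (x + k * N) - f x| < ε` for all integers `k` and all real `x`. -/
def PrePeriodic (f : ℝ → ℂ) : Prop :=
  Continuous f ∧ (∀ x : ℝ, ‖f x‖ = 1) ∧
    ∀ ε : ℝ, 0 < ε → ∃ N : ℕ, 0 < N ∧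
      ∀ (k : ℤ) (x : ℝ), ‖f (x + (k : ℝ) * (N : ℝ)) - f x‖ < ε

/-- `F : ℝ → ℝ` is a lift of `f : ℝ → S¹ ⊆ ℂ` if `F` is continuous and
`f x = e^{2 π i F x}` for all `x`. -/
def IsLift (f : ℝ → ℂ) (F : ℝ → ℝ) : Prop :=
  Continuous F ∧ ∀ x : ℝ, f x = Complex.exp (2 * Real.pi * Complex.I * (F x : ℂ))

/-!
Only one almost-period `T` with tolerance `√3` is needed. A chord of the unit circle is shorter
than `√3` exactly when it cuts off less than a third of a turn, so for a lift `F` every increment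
`F (x + k * T) - F x` lies within `1/3` of its nearest integer. Three errors below `1/3` add up to
less than `1`, hence rounding is additive on these increments. By connectedness
`F (x + T) - F x` rounds to an integer `m` independent of `x`, so `F (x + k * T) - F x` rounds to
`k * m`. Hence `F x - (m / T) * x` is bounded, and the limit is `m / T`. Two lifts differ by a
constant integer, which cancels in `F x - F (-x)`.
-/

section Round

variable {α : Type*} [Field α] [LinearOrder α] [IsStrictOrderedRing α] [FloorRing α]

lemma round_eq_of_abs_sub_lt_half {a : α} {n : ℤ} (h : |a - n| < 1 / 2) : round a = n := by
  rw [abs_lt] at h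
  exact round_eq_iff.mpr ⟨by linarith, by linarith⟩

lemma round_add_of_abs_sub_round_lt_third {a b : α} (ha : |a - round a| < 1 / 3)
    (hb : |b - round b| < 1 / 3) (hab : |a + b - round (a + b)| < 1 / 3) :
    round (a + b) = round a + round b := by
  rw [abs_lt] at ha hb hab
  have h_lt : (round (a + b) : α) < round a + round b + 1 := by linarith
  have h_gt : (round a : α) + round b < round (a + b) + 1 := by linarith
  norm_cast at h_lt h_gt
  lia

end Round

lemma round_apply_eq_of_abs_sub_round_lt_half {X : Type*} [TopologicalSpace X]
    [PreconnectedSpace X] {D : X → ℝ} (hD : Continuous D)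
    (h : ∀ x, |D x - round (D x)| < 1 / 2) (x y : X) : round (D x) = round (D y) := by
  refine IsLocallyConstant.apply_eq_of_preconnectedSpace (f := fun x => round (D x))
    ((IsLocallyConstant.iff_eventually_eq _).mpr fun x => ?_) x y
  have h_near : ∀ᶠ y in nhds x, |D y - round (D x)| < 1 / 2 :=
    (hD.sub continuous_const).abs.continuousAt.eventually_lt_const (h x)
  exact h_near.mono fun y hy => round_eq_of_abs_sub_lt_half hy

lemma norm_exp_two_pi_I_mul_sub_exp (a b : ℝ) :
    ‖Complex.exp (2 * Real.pi * Complex.I * a) - Complex.exp (2 * Real.pi * Complex.I * b)‖ =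
      2 * |Real.sin (Real.pi * (a - b))| := by
  have h_factor : Complex.exp (2 * Real.pi * Complex.I * a)
      - Complex.exp (2 * Real.pi * Complex.I * b) =
      Complex.exp ((2 * Real.pi * b : ℝ) * Complex.I) *
        (Complex.exp (Complex.I * (2 * Real.pi * (a - b) : ℝ)) - 1) := by
    rw [mul_sub, mul_one, ← Complex.exp_add]
    push_cast
    ring_nf
  rw [h_factor, norm_mul, Complex.norm_exp_ofReal_mul_I, one_mul,
    Complex.norm_exp_I_mul_ofReal_sub_one, norm_mul, Real.norm_two, Real.norm_eq_abs]
  ring_nf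

lemma abs_sin_pi_mul_eq_sin_pi_mul_abs_sub_round (t : ℝ) :
    |Real.sin (Real.pi * t)| = Real.sin (Real.pi * |t - round t|) := by
  have h_shift : Real.pi * (t - round t) = Real.pi * t - round t * Real.pi := by ring
  have h_range : |Real.pi * (t - round t)| ≤ Real.pi := by
    rw [abs_mul, abs_of_pos Real.pi_pos]
    nlinarith [abs_sub_round t, Real.pi_pos]
  calc |Real.sin (Real.pi * t)| = |Real.sin (Real.pi * (t - round t))| := by
        rw [h_shift, Real.sin_sub_int_mul_pi, abs_mul, abs_neg_one_zpow, one_mul]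
    _ = Real.sin (Real.pi * |t - round t|) := by
        rw [Real.abs_sin_eq_sin_abs_of_abs_le_pi h_range, abs_mul, abs_of_pos Real.pi_pos]

lemma abs_sub_round_lt_third_of_norm_exp_sub_exp_lt {a b : ℝ}
    (h : ‖Complex.exp (2 * Real.pi * Complex.I * a)
      - Complex.exp (2 * Real.pi * Complex.I * b)‖ < √3) :
    |a - b - round (a - b)| < 1 / 3 := by
  rw [norm_exp_two_pi_I_mul_sub_exp, abs_sin_pi_mul_eq_sin_pi_mul_abs_sub_round] at h
  by_contra! h_far
  have h_mono : Real.sin (Real.pi / 3) ≤ Real.sin (Real.pi * |a - b - round (a - b)|) :=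
    Real.sin_le_sin_of_le_of_le_pi_div_two (by linarith [Real.pi_pos])
      (by nlinarith [abs_sub_round (a - b), Real.pi_pos]) (by nlinarith [Real.pi_pos])
  rw [Real.sin_pi_div_three] at h_mono
  linarith

lemma exists_isLift {f : ℝ → ℂ} (hf : Continuous f) (hf_norm : ∀ x, ‖f x‖ = 1) :
    ∃ F : ℝ → ℝ, IsLift f F := by
  let g : C(ℝ, Circle) :=
    ⟨fun x => ⟨f x, mem_sphere_zero_iff_norm.mpr (hf_norm x)⟩, hf.subtype_mk _⟩
  obtain ⟨F, ⟨-, hF⟩, -⟩ :=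
    Circle.isCoveringMap_exp.existsUnique_continuousMap_lifts g 0 _ (Circle.exp_arg (g 0))
  refine ⟨fun x => F x / (2 * Real.pi), F.continuous.div_const _, fun x => ?_⟩
  have h_exp : (Circle.exp (F x) : ℂ) = f x := congrArg Subtype.val (congrFun hF x)
  rw [← h_exp, Circle.coe_exp]
  push_cast
  field_simp

lemma IsLift.exists_eq_add_intCast {f : ℝ → ℂ} {F G : ℝ → ℝ} (hF : IsLift f F)
    (hG : IsLift f G) : ∃ n : ℤ, ∀ x, F x = G x + n := by
  have h_int : ∀ x, F x - G x = round (F x - G x) := fun x => by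
    obtain ⟨n, hn⟩ := Complex.exp_eq_exp_iff_exists_int.mp ((hF.2 x).symm.trans (hG.2 x))
    have h_eq : (F x : ℂ) = G x + n :=
      mul_left_cancel₀ Complex.two_pi_I_ne_zero (by linear_combination hn)
    have h_sub : F x - G x = n := by
      rw [sub_eq_iff_eq_add']
      exact_mod_cast h_eq
    rw [h_sub, round_intCast]
  have h_const (x : ℝ) : round (F x - G x) = round (F 0 - G 0) :=
    round_apply_eq_of_abs_sub_round_lt_half (D := fun x => F x - G x) (hF.1.sub hG.1)
      (fun x => by simp [← h_int x]) x 0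
  exact ⟨round (F 0 - G 0), fun x => by rw [← h_const x, ← h_int x, add_sub_cancel]⟩

lemma exists_abs_add_mul_sub_lt_third {F : ℝ → ℝ} (hF : Continuous F) {T : ℝ}
    (h : ∀ (k : ℤ) (x : ℝ), |F (x + k * T) - F x - round (F (x + k * T) - F x)| < 1 / 3) :
    ∃ m : ℤ, ∀ (k : ℤ) (x : ℝ), |F (x + k * T) - F x - k * m| < 1 / 3 := by
  have h_one (x : ℝ) : |F (x + T) - F x - round (F (x + T) - F x)| < 1 / 3 := by
    simpa only [Int.cast_one, one_mul] using h 1 x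
  have h_const (x : ℝ) : round (F (x + T) - F x) = round (F (0 + T) - F 0) :=
    round_apply_eq_of_abs_sub_round_lt_half (D := fun x => F (x + T) - F x) (by fun_prop)
      (fun x => (h_one x).trans (by norm_num)) x 0
  set m : ℤ := round (F (0 + T) - F 0)
  have h_step (k : ℤ) (x : ℝ) :
      round (F (x + (k + 1 : ℤ) * T) - F x) = round (F (x + k * T) - F x) + m := by
    have h_split : F (x + (k + 1 : ℤ) * T) - F x =
        (F (x + k * T) - F x) + (F (x + k * T + T) - F (x + k * T)) := by
      push_cast
      ring_nf
    have h_sum := h (k + 1) x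
    rw [h_split] at h_sum ⊢
    rw [round_add_of_abs_sub_round_lt_third (h k x) (h_one _) h_sum, h_const]
  have h_round (k : ℤ) (x : ℝ) : round (F (x + k * T) - F x) = k * m := by
    induction k with
    | zero => simp
    | succ k ih => rw [h_step, ih]; ring
    | pred k ih =>
      have h_prev := h_step (-k - 1) x
      rw [sub_add_cancel, ih] at h_prev
      linear_combination -h_prev
  refine ⟨m, fun k x => ?_⟩
  simpa only [h_round, Int.cast_mul] using h k x

lemma exists_forall_abs_le_of_abs_add_mul_sub_le {G : ℝ → ℝ} (hG : Continuous G) {T C : ℝ}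
    (hT : 0 < T) (h : ∀ (k : ℤ) (x : ℝ), |G (x + k * T) - G x| ≤ C) :
    ∃ B, ∀ x, |G x| ≤ B := by
  obtain ⟨M, hM⟩ := (isCompact_Icc (a := 0) (b := T)).exists_bound_of_continuousOn hG.continuousOn
  refine ⟨M + C, fun x => ?_⟩
  obtain ⟨k, hk, -⟩ := existsUnique_add_zsmul_mem_Ico hT x 0
  rw [zero_add, zsmul_eq_mul] at hk
  calc |G x| = |G (x + k * T) - (G (x + k * T) - G x)| := by rw [sub_sub_cancel]
    _ ≤ |G (x + k * T)| + |G (x + k * T) - G x| := abs_sub _ _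
    _ ≤ M + C := add_le_add (hM _ (Set.Ico_subset_Icc_self hk)) (h k x)

lemma tendsto_sub_neg_div_two_mul_of_abs_sub_mul_le {F : ℝ → ℝ} {c B : ℝ}
    (h : ∀ x, |F x - c * x| ≤ B) :
    Tendsto (fun x : ℝ => (F x - F (-x)) / (2 * x)) atTop (nhds c) := by
  have h_bound (x : ℝ) : |(F x - c * x) - (F (-x) - c * -x)| ≤ B + B :=
    (abs_sub _ _).trans (add_le_add (h x) (h (-x)))
  have h_error : Tendsto (fun x : ℝ => ((F x - c * x) - (F (-x) - c * -x)) / (2 * x))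
      atTop (nhds 0) :=
    tendsto_bdd_div_atTop_nhds_zero (.of_forall fun x => (abs_le.mp (h_bound x)).1)
      (.of_forall fun x => (abs_le.mp (h_bound x)).2) (tendsto_id.const_mul_atTop two_pos)
  have h_limit := h_error.const_add c
  rw [add_zero] at h_limit
  refine h_limit.congr' ?_
  filter_upwards [eventually_ne_atTop 0] with x hx
  field_simp
  ring

lemma IsLift.exists_tendsto_intCast_div {f : ℝ → ℂ} {F : ℝ → ℝ} (hF : IsLift f F) {T : ℝ}
    (hT : 0 < T) (h : ∀ (k : ℤ) (x : ℝ), ‖f (x + k * T) - f x‖ < √3) :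
    ∃ m : ℤ, Tendsto (fun x : ℝ => (F x - F (-x)) / (2 * x)) atTop (nhds (m / T)) := by
  obtain ⟨m, hm⟩ := exists_abs_add_mul_sub_lt_third (T := T) hF.1 fun k x =>
    abs_sub_round_lt_third_of_norm_exp_sub_exp_lt (by rw [← hF.2, ← hF.2]; exact h k x)
  have h_detrended (k : ℤ) (x : ℝ) :
      |(F (x + k * T) - m / T * (x + k * T)) - (F x - m / T * x)| ≤ 1 / 3 := by
    have h_eq : (F (x + k * T) - m / T * (x + k * T)) - (F x - m / T * x) =
        F (x + k * T) - F x - k * m := by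
      field_simp
      ring
    exact h_eq ▸ (hm k x).le
  obtain ⟨B, hB⟩ := exists_forall_abs_le_of_abs_add_mul_sub_le
    (hF.1.sub (continuous_const.mul continuous_id)) hT h_detrended
  exact ⟨m, tendsto_sub_neg_div_two_mul_of_abs_sub_mul_le hB⟩

theorem preperiodic_generalized_winding_number_general {f : ℝ → ℂ} (hf : Continuous f)
    (hf_norm : ∀ x, ‖f x‖ = 1) {T : ℝ} (hT : 0 < T)
    (h : ∀ (k : ℤ) (x : ℝ), ‖f (x + k * T) - f x‖ < √3) :
    (∃ F : ℝ → ℝ, IsLift f F) ∧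
      ∃ m : ℤ, ∀ F : ℝ → ℝ, IsLift f F →
        Tendsto (fun x : ℝ => (F x - F (-x)) / (2 * x)) atTop (nhds (m / T)) := by
  obtain ⟨F₀, hF₀⟩ := exists_isLift hf hf_norm
  obtain ⟨m, hm⟩ := hF₀.exists_tendsto_intCast_div hT h
  refine ⟨⟨F₀, hF₀⟩, m, fun F hF => ?_⟩
  obtain ⟨n, hn⟩ := hF.exists_eq_add_intCast hF₀
  simpa only [hn, add_sub_add_right_eq_sub] using hm

/-- For any pre-periodic function `f`, a lift exists, and for any lift `F` of `f` the limit
`lim_{x → +∞} (F x - F (-x)) / (2x)` exists, is a rational number, and does not depend on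
the choice of the lift: it is the *generalized winding number* of `f`. -/
theorem preperiodic_generalized_winding_number (f : ℝ → ℂ) (hf : PrePeriodic f) :
    (∃ F : ℝ → ℝ, IsLift f F) ∧
      ∃ q : ℚ, ∀ F : ℝ → ℝ, IsLift f F →
        Tendsto (fun x : ℝ => (F x - F (-x)) / (2 * x)) atTop (nhds (q : ℝ)) := by
  obtain ⟨N, hN, h⟩ := hf.2.2 √3 (by positivity)
  obtain ⟨h_lift, m, hm⟩ :=
    preperiodic_generalized_winding_number_general hf.1 hf.2.1 (Nat.cast_pos.mpr hN) h
  exact ⟨h_lift, m / N, by exact_mod_cast hm⟩
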